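/- Let k be an algebraically closed field and S = k[x_1,...,x_r]. Suppose D = (p_{ij}) is an 8×8 matrix with entries in S satisfying the standard conditions, and suppose moreover that p_{ij} = 0 unless (1 ≤ i ≤ 2 and 3 ≤ j ≤ 8) or (3 ≤ i ≤ 6 and 7 ≤ j ≤ 8). Then r < 3, i.e., r ≤ 2. -/

import Mathlib

open MvPolynomial

/-- The "standard conditions" on an `8 × 8` matrix `D = (p_{ij})` with entries in
`S = k[x_1, ..., x_r]`:
(1) `D` is strictly upper triangular;
(2) `D² = 0`;
(3) every entry vanishes at the origin;
(4) for every nonzero point `a ∈ k^r` the evaluated matrix `D(a)` has rank `4`;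
(5) there is a nonincreasing `8`-tuple of integers `(d_1, ..., d_8)` such that each `p_{ij}`
is homogeneous of degree `d_i - d_j + 1` (the zero polynomial being homogeneous of
any degree). -/
def StandardConditions {k : Type*} [Field k] {r : ℕ}
    (D : Matrix (Fin 8) (Fin 8) (MvPolynomial (Fin r) k)) : Prop :=
  (∀ i j : Fin 8, j ≤ i → D i j = 0) ∧
  D * D = 0 ∧
  (∀ i j : Fin 8, eval (0 : Fin r → k) (D i j) = 0) ∧
  (∀ a : Fin r → k, a ≠ 0 → (D.map (eval a)).rank = 4) ∧
  (∃ d : Fin 8 → ℤ, Antitone d ∧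
    ∀ i j : Fin 8, D i j = 0 ∨
      (0 ≤ d i - d j + 1 ∧ (D i j).IsHomogeneous (d i - d j + 1).toNat))

/-!
The blocks of `D` just above the diagonal form a complex `0 → S^l → S^n → S^m` with maps `B` and
`A`, and comparing ranks with block sizes shows that it becomes a short exact sequence at every
point `a ≠ 0`. By the Nullstellensatz its homology over `S` is killed by powers of every variable.
Powers of distinct variables form a regular sequence, so with three variables the depth of the free
modules is large enough for a Koszul argument to force `A` to be surjective over `S` itself. But
`A` vanishes at the origin.
-/

open Matrix RingTheory.Sequence

section RegularSequences

variable {R : Type*} [CommRing R] {F G H : Type*} [AddCommGroup F] [Module R F]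
  [AddCommGroup G] [Module R G] [AddCommGroup H] [Module R H] {x y z : R}

lemma isWeaklyRegular_of_flat [Module.Flat R F] {rs : List R} (h : IsWeaklyRegular R rs) :
    IsWeaklyRegular F rs :=
  ((TensorProduct.rid R F).isWeaklyRegular_congr rs).mp h.isWeaklyRegular_lTensor

lemma exists_eq_smul_of_smul_eq_smul (h : IsWeaklyRegular F [x, y]) {m a : F}
    (hm : y • m = x • a) : ∃ s, m = x • s := by
  have hmem : m ∈ (Ideal.ofList [x] • ⊤ : Submodule R F) := by
    refine mem_of_isSMulRegular_quotient_of_smul_mem (h.regular_mod_prev 1 (by simp)) ?_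
    simpa [Submodule.ideal_span_singleton_smul, Submodule.mem_smul_pointwise_iff_exists]
      using ⟨a, hm.symm⟩
  simpa [Submodule.ideal_span_singleton_smul, Submodule.mem_smul_pointwise_iff_exists, eq_comm]
    using hmem

lemma exists_eq_smul_add_smul_of_smul_eq (h : IsWeaklyRegular F [x, y, z]) {m a b : F}
    (hm : z • m = x • a + y • b) : ∃ s t, m = x • s + y • t := by
  have hmem : m ∈ (Ideal.ofList [x, y] • ⊤ : Submodule R F) := by
    refine mem_of_isSMulRegular_quotient_of_smul_mem (h.regular_mod_prev 2 (by simp)) ?_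
    simpa [Submodule.sup_smul, Submodule.ideal_span_singleton_smul, Submodule.mem_sup,
      Submodule.mem_smul_pointwise_iff_exists] using ⟨a, b, hm.symm⟩
  simpa [Submodule.sup_smul, Submodule.ideal_span_singleton_smul, Submodule.mem_sup,
    Submodule.mem_smul_pointwise_iff_exists, eq_comm] using hmem

lemma mem_range_of_smul_mem_range_of_injective (hF : IsWeaklyRegular F [x, y])
    (hG : IsSMulRegular G x) {g : F →ₗ[R] G} (hg : Function.Injective g) {v : G}
    (hx : x • v ∈ LinearMap.range g) (hy : y • v ∈ LinearMap.range g) :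
    v ∈ LinearMap.range g := by
  obtain ⟨a, ha⟩ := hx
  obtain ⟨b, hb⟩ := hy
  have hab : y • a = x • b := hg (by rw [map_smul, map_smul, ha, hb, smul_comm])
  obtain ⟨s, rfl⟩ := exists_eq_smul_of_smul_eq_smul hF hab
  exact ⟨s, hG (by simpa only [map_smul] using ha)⟩

/- The classes of `x • v`, `y • v`, `z • v` form a Koszul cocycle; chasing it back through `f` and
`g` costs one unit of depth at each step. -/
lemma mem_range_of_smul_mem_range_of_exact (hF : IsWeaklyRegular F [x, y, z])
    (hG : IsWeaklyRegular G [x, y]) (hH : IsSMulRegular H x) {g : F →ₗ[R] G} {f : G →ₗ[R] H}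
    (hg : Function.Injective g) (hgf : Function.Exact g f) {v : H}
    (hx : x • v ∈ LinearMap.range f) (hy : y • v ∈ LinearMap.range f)
    (hz : z • v ∈ LinearMap.range f) : v ∈ LinearMap.range f := by
  obtain ⟨a, ha⟩ := hx
  obtain ⟨b, hb⟩ := hy
  obtain ⟨c, hc⟩ := hz
  have lift_syzygy {p q : R} {s t : G} (hs : f s = p • v) (ht : f t = q • v) :
      ∃ u, g u = q • s - p • t :=
    (hgf _).mp (by rw [map_sub, map_smul, map_smul, hs, ht, smul_comm, sub_self])
  obtain ⟨u, hu⟩ := lift_syzygy ha hb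
  obtain ⟨u', hu'⟩ := lift_syzygy ha hc
  obtain ⟨u'', hu''⟩ := lift_syzygy hb hc
  have cocycle : z • u = x • (-u'') + y • u' := hg (by
    simp only [map_add, map_smul, map_neg, hu, hu', hu'']
    module)
  obtain ⟨s, t, rfl⟩ := exists_eq_smul_add_smul_of_smul_eq hF cocycle
  have hdiff : y • (a - g t) = x • (b + g s) := by
    rw [map_add, map_smul, map_smul] at hu
    linear_combination (norm := module) -hu
  obtain ⟨w, hw⟩ := exists_eq_smul_of_smul_eq_smul hG hdiff
  refine ⟨w, hH ?_⟩
  calc x • f w = f (a - g t) := by rw [hw, map_smul]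
    _ = x • v := by rw [map_sub, hgf.apply_apply_eq_zero, sub_zero, ha]

end RegularSequences

section Variables

variable {σ : Type*}

lemma mem_span_monomial_of_X_pow_mul_mem {R : Type*} [CommSemiring R] {s : Set (σ →₀ ℕ)} {i : σ}
    (hs : ∀ t ∈ s, t i = 0) {n : ℕ} {p : MvPolynomial σ R}
    (hp : X i ^ n * p ∈ Ideal.span ((fun t ↦ monomial t (1 : R)) '' s)) :
    p ∈ Ideal.span ((fun t ↦ monomial t (1 : R)) '' s) := by
  classical
  rw [mem_ideal_span_monomial_image] at hp ⊢
  intro m hm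
  obtain ⟨t, ht, hle⟩ := hp (Finsupp.single i n + m) (by
    rw [mem_support_iff, X_pow_eq_monomial, coeff_monomial_mul, one_mul]
    exact mem_support_iff.mp hm)
  refine ⟨t, ht, fun j ↦ ?_⟩
  obtain rfl | hij := eq_or_ne i j
  · simp [hs t ht]
  · simpa [Finsupp.single_eq_of_ne' hij] using hle j

lemma isWeaklyRegular_map_X_pow {R : Type*} [CommRing R] {L : List σ} (hL : L.Nodup)
    (e : σ → ℕ) :
    IsWeaklyRegular (MvPolynomial σ R) (L.map fun i ↦ (X i ^ e i : MvPolynomial σ R)) := by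
  refine ⟨fun n hn ↦ ?_⟩
  rw [List.length_map] at hn
  have hspan : Ideal.ofList ((L.map fun i ↦ (X i ^ e i : MvPolynomial σ R)).take n) =
      Ideal.span ((fun t ↦ monomial t (1 : R)) ''
        ((fun i ↦ Finsupp.single i (e i)) '' {i | i ∈ L.take n})) := by
    refine congrArg Ideal.span (Set.ext fun p ↦ ?_)
    simp [← List.map_take, X_pow_eq_monomial]
  have hnotMem : L[n] ∉ L.take n := by
    rw [List.mem_take_iff_getElem]
    rintro ⟨j, hj, hjn⟩
    have := hL.getElem_inj_iff.mp hjn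
    omega
  rw [isSMulRegular_quotient_iff_mem_of_smul_mem, smul_eq_mul, Ideal.mul_top, hspan]
  intro p hp
  rw [List.getElem_map] at hp
  refine mem_span_monomial_of_X_pow_mul_mem ?_ hp
  rintro _ ⟨i, hi, rfl⟩
  exact Finsupp.single_eq_of_ne (ne_of_mem_of_not_mem hi hnotMem).symm

end Variables

section MatrixMaps

lemma exists_matrix_map_eq_of_surjective {R S m n : Type*} {f : R → S}
    (hf : Function.Surjective f) (M : Matrix m n S) : ∃ N : Matrix m n R, N.map f = M :=
  ⟨M.map (Function.surjInv hf), by ext; simp [Function.surjInv_eq]⟩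

variable {R m n l : Type*} [CommRing R] [Fintype m] [Fintype n] [Fintype l]

lemma det_mul_smul_mem_range_mulVecLin [DecidableEq m] (A : Matrix m n R) (P : Matrix n m R)
    (v : m → R) : (A * P).det • v ∈ LinearMap.range A.mulVecLin :=
  ⟨(P * (A * P).adjugate) *ᵥ v, by
    rw [mulVecLin_apply, mulVec_mulVec, ← Matrix.mul_assoc, mul_adjugate, smul_mulVec, one_mulVec]⟩

lemma mul_adjugate_mul_mulVec_mulVec [DecidableEq l] (B : Matrix n l R) (Q : Matrix l n R)
    (w : l → R) :
    (B * (Q * B).adjugate * Q) *ᵥ (B *ᵥ w) = (Q * B).det • (B *ᵥ w) := by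
  rw [mulVec_mulVec, Matrix.mul_assoc, Matrix.mul_assoc, adjugate_mul, Matrix.mul_smul,
    Matrix.mul_one, smul_mulVec]

lemma exists_map_det_mul_eq_one_of_surjective {K : Type*} [CommRing K] {φ : R →+* K}
    (hφ : Function.Surjective φ) [DecidableEq m] {A : Matrix m n R}
    (hA : Function.Surjective (A.map φ).mulVec) : ∃ P : Matrix n m R, φ (A * P).det = 1 := by
  obtain ⟨P, hP⟩ := mulVec_surjective_iff_exists_right_inverse.mp hA
  obtain ⟨P, rfl⟩ := exists_matrix_map_eq_of_surjective hφ P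
  exact ⟨P, by rw [RingHom.map_det, RingHom.mapMatrix_apply, Matrix.map_mul, hP, det_one]⟩

lemma exists_map_det_mul_eq_one_of_injective {K : Type*} [Field K] {φ : R →+* K}
    (hφ : Function.Surjective φ) [DecidableEq l] {B : Matrix n l R}
    (hB : Function.Injective (B.map φ).mulVec) : ∃ Q : Matrix l n R, φ (Q * B).det = 1 := by
  classical
  obtain ⟨g, hg⟩ :=
    (toLin' (B.map φ)).exists_leftInverse_of_injective (LinearMap.ker_eq_bot.mpr hB)
  obtain ⟨Q, hQ⟩ := exists_matrix_map_eq_of_surjective hφ g.toMatrix'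
  have hQB : Q.map φ * B.map φ = 1 := by
    rw [hQ, ← LinearMap.toMatrix'_toLin' (B.map φ), ← LinearMap.toMatrix'_comp, hg,
      LinearMap.toMatrix'_id]
  exact ⟨Q, by rw [RingHom.map_det, RingHom.mapMatrix_apply, Matrix.map_mul, hQB, det_one]⟩

end MatrixMaps

section PuncturedAffineSpace

variable {k σ : Type*} [Field k]

lemma eq_of_eval_eq_of_ne_zero {R : Type*} [CommRing R] [IsDomain R] [Infinite R] [Nonempty σ]
    {p q : MvPolynomial σ R} (h : ∀ a : σ → R, a ≠ 0 → eval a p = eval a q) : p = q := by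
  let i : σ := Classical.arbitrary σ
  refine mul_left_cancel₀ (X_ne_zero i) (MvPolynomial.funext fun a ↦ ?_)
  obtain rfl | ha := eq_or_ne a 0
  · simp
  · rw [map_mul, map_mul, h a ha]

lemma exists_X_pow_smul_mem [IsAlgClosed k] [Finite σ] {M : Type*} [AddCommMonoid M]
    [Module (MvPolynomial σ k) M] {N : Submodule (MvPolynomial σ k) M} {v : M}
    (h : ∀ a : σ → k, a ≠ 0 → ∃ g, eval a g ≠ 0 ∧ g • v ∈ N) :
    ∃ e : σ → ℕ, ∀ i, (X i ^ e i : MvPolynomial σ k) • v ∈ N := by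
  let J : Ideal (MvPolynomial σ k) := N.comap (LinearMap.toSpanSingleton _ _ v)
  have hX (i : σ) : X i ∈ J.radical := by
    rw [← vanishingIdeal_zeroLocus_eq_radical (K := k), mem_vanishingIdeal_iff]
    intro a ha
    obtain rfl | hne := eq_or_ne a 0
    · simp
    · obtain ⟨g, hg, hgv⟩ := h a hne
      exact absurd (ha g hgv) (by simpa only [aeval_eq_eval] using hg)
  choose e he using hX
  exact ⟨e, he⟩

variable {m n l : Type*} [Fintype l]
  {A : Matrix m n (MvPolynomial σ k)} {B : Matrix n l (MvPolynomial σ k)}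

lemma injective_mulVecLin_of_injective_eval [Infinite k] [Nonempty σ]
    (hB : ∀ a : σ → k, a ≠ 0 → Function.Injective (B.map (eval a)).mulVec) :
    Function.Injective B.mulVecLin := by
  intro v w hvw
  ext1 j
  refine eq_of_eval_eq_of_ne_zero fun a ha ↦ congrFun (hB a ha ?_ : eval a ∘ v = eval a ∘ w) j
  ext i
  rw [← RingHom.map_mulVec, ← RingHom.map_mulVec]
  exact congrArg (eval a) (congrFun hvw i)

lemma exists_X_pow_smul_mem_range_of_surjective_eval [IsAlgClosed k] [Finite σ] [Finite m]
    [Fintype n]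
    (hA : ∀ a : σ → k, a ≠ 0 → Function.Surjective (A.map (eval a)).mulVec)
    (v : m → MvPolynomial σ k) :
    ∃ e : σ → ℕ, ∀ i, (X i ^ e i : MvPolynomial σ k) • v ∈ LinearMap.range A.mulVecLin := by
  classical
  have := Fintype.ofFinite m
  refine exists_X_pow_smul_mem fun a ha ↦ ?_
  obtain ⟨P, hP⟩ := exists_map_det_mul_eq_one_of_surjective (fun c ↦ ⟨C c, eval_C c⟩) (hA a ha)
  exact ⟨_, by simp [hP], det_mul_smul_mem_range_mulVecLin A P v⟩

lemma exists_X_pow_smul_mem_range_of_injective_eval [IsAlgClosed k] [Finite σ] [Nonempty σ]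
    [Finite n]
    (hB : ∀ a : σ → k, a ≠ 0 → Function.Injective (B.map (eval a)).mulVec)
    {v : n → MvPolynomial σ k}
    (hv : ∀ a : σ → k, a ≠ 0 → eval a ∘ v ∈ Set.range (B.map (eval a)).mulVec) :
    ∃ e : σ → ℕ, ∀ i, (X i ^ e i : MvPolynomial σ k) • v ∈ LinearMap.range B.mulVecLin := by
  classical
  have := Fintype.ofFinite n
  have : Infinite k := IsAlgClosed.instInfinite
  refine exists_X_pow_smul_mem fun a ha ↦ ?_
  obtain ⟨Q, hQ⟩ := exists_map_det_mul_eq_one_of_injective (fun c ↦ ⟨C c, eval_C c⟩) (hB a ha)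
  have hdet : (B * (Q * B).adjugate * Q) *ᵥ v = (Q * B).det • v := by
    ext1 i
    refine eq_of_eval_eq_of_ne_zero fun b hb ↦ ?_
    obtain ⟨w, hw⟩ := hv b hb
    have hadj : (B * (Q * B).adjugate * Q).map (eval b) =
        B.map (eval b) * (Q.map (eval b) * B.map (eval b)).adjugate * Q.map (eval b) := by
      rw [Matrix.map_mul, Matrix.map_mul, ← RingHom.mapMatrix_apply _ (adjugate _),
        RingHom.map_adjugate, RingHom.mapMatrix_apply, Matrix.map_mul]
    rw [RingHom.map_mulVec, hadj, ← hw, mul_adjugate_mul_mulVec_mulVec, hw]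
    simp [RingHom.map_det, Matrix.map_mul]
  refine ⟨(Q * B).det, by simp [hQ], ((Q * B).adjugate * Q) *ᵥ v, ?_⟩
  rw [mulVecLin_apply, mulVec_mulVec, ← Matrix.mul_assoc, hdet]

variable [Fintype n]

lemma exact_mulVecLin_of_exact_eval [IsAlgClosed k] [Finite σ] [Nontrivial σ]
    (hB : ∀ a : σ → k, a ≠ 0 → Function.Injective (B.map (eval a)).mulVec)
    (hBA : ∀ a : σ → k, a ≠ 0 →
      Function.Exact (B.map (eval a)).mulVec (A.map (eval a)).mulVec) :
    Function.Exact B.mulVecLin A.mulVecLin := by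
  have : Infinite k := IsAlgClosed.instInfinite
  have eval_eq_zero_iff (v : n → MvPolynomial σ k) :
      A *ᵥ v = 0 ↔ ∀ a : σ → k, a ≠ 0 → A.map (eval a) *ᵥ (eval a ∘ v) = 0 := by
    refine ⟨fun hv a _ ↦ ?_, fun hv ↦ ?_⟩
    · ext i
      rw [← RingHom.map_mulVec, hv, Pi.zero_apply, map_zero, Pi.zero_apply]
    · ext1 i
      refine eq_of_eval_eq_of_ne_zero fun a ha ↦ ?_
      rw [RingHom.map_mulVec, hv a ha, Pi.zero_apply, Pi.zero_apply, map_zero]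
  intro v
  refine (eval_eq_zero_iff v).trans ⟨fun hv ↦ ?_, ?_⟩
  · obtain ⟨i, j, hij⟩ := exists_pair_ne σ
    obtain ⟨e, he⟩ := exists_X_pow_smul_mem_range_of_injective_eval hB
      fun a ha ↦ (hBA a ha _).mp (hv a ha)
    have hreg : IsWeaklyRegular (MvPolynomial σ k) [X i ^ e i, X j ^ e j] :=
      isWeaklyRegular_map_X_pow (L := [i, j]) (by simpa using hij) e
    exact mem_range_of_smul_mem_range_of_injective (isWeaklyRegular_of_flat hreg)
      (.pi fun _ ↦ IsSMulRegular.of_ne_zero (pow_ne_zero _ (X_ne_zero i)))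
      (injective_mulVecLin_of_injective_eval hB) (he i) (he j)
  · rintro ⟨w, rfl⟩ a ha
    exact (hBA a ha _).mpr ⟨eval a ∘ w, by ext i; simp [RingHom.map_mulVec]⟩

theorem surjective_mulVecLin_of_exact_eval [IsAlgClosed k] [Fintype σ] [Finite m]
    (hσ : 2 < Fintype.card σ)
    (hB : ∀ a : σ → k, a ≠ 0 → Function.Injective (B.map (eval a)).mulVec)
    (hBA : ∀ a : σ → k, a ≠ 0 →
      Function.Exact (B.map (eval a)).mulVec (A.map (eval a)).mulVec)
    (hA : ∀ a : σ → k, a ≠ 0 → Function.Surjective (A.map (eval a)).mulVec) :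
    Function.Surjective A.mulVecLin := by
  have : Infinite k := IsAlgClosed.instInfinite
  obtain ⟨i, j, l, hij, hil, hjl⟩ := Fintype.two_lt_card_iff.mp hσ
  have : Nontrivial σ := ⟨i, j, hij⟩
  intro v
  obtain ⟨e, he⟩ := exists_X_pow_smul_mem_range_of_surjective_eval hA v
  have hreg₃ : IsWeaklyRegular (MvPolynomial σ k) [X i ^ e i, X j ^ e j, X l ^ e l] :=
    isWeaklyRegular_map_X_pow (L := [i, j, l]) (by simp [hij, hil, hjl]) e
  have hreg₂ : IsWeaklyRegular (MvPolynomial σ k) [X i ^ e i, X j ^ e j] :=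
    isWeaklyRegular_map_X_pow (L := [i, j]) (by simpa using hij) e
  exact mem_range_of_smul_mem_range_of_exact (isWeaklyRegular_of_flat hreg₃)
    (isWeaklyRegular_of_flat hreg₂) (.pi fun _ ↦ .of_ne_zero (pow_ne_zero _ (X_ne_zero i)))
    (injective_mulVecLin_of_injective_eval hB) (exact_mulVecLin_of_exact_eval hB hBA)
    (he i) (he j) (he l)

end PuncturedAffineSpace

section Rank

variable {K m n l : Type*} [Field K]

lemma surjective_mulVec_of_card_le_rank [Fintype m] [Fintype n] {A : Matrix m n K}
    (hA : Fintype.card m ≤ A.rank) :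
    Function.Surjective A.mulVec := by
  suffices LinearMap.range A.mulVecLin = ⊤ from LinearMap.range_eq_top.mp this
  refine Submodule.eq_top_of_finrank_eq ?_
  rw [Module.finrank_fintype_fun_eq_card]
  exact A.rank_le_card_height.antisymm hA

lemma injective_mulVec_of_card_le_rank [Fintype l] {B : Matrix n l K}
    (hB : Fintype.card l ≤ B.rank) :
    Function.Injective B.mulVec := by
  rw [mulVec_injective_iff, linearIndependent_iff_card_le_finrank_span, Set.finrank,
    ← rank_eq_finrank_span_cols]
  exact hB

lemma exact_mulVec_of_card_le_rank_add_rank [Fintype n] [Fintype l] {A : Matrix m n K}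
    {B : Matrix n l K} (hAB : A * B = 0) (h : Fintype.card n ≤ A.rank + B.rank) :
    Function.Exact B.mulVec A.mulVec := by
  have hle : LinearMap.range B.mulVecLin ≤ LinearMap.ker A.mulVecLin := by
    rw [LinearMap.range_le_ker_iff, ← mulVecLin_mul, hAB, mulVecLin_zero]
  refine LinearMap.exact_iff.mpr (Submodule.eq_of_le_of_finrank_le hle ?_).symm
  have hrank := A.mulVecLin.finrank_range_add_finrank_ker
  rw [Module.finrank_fintype_fun_eq_card] at hrank
  unfold Matrix.rank at h
  omega

lemma rank_le_rank_toBlock_add_card [Finite m] [Fintype n] (M : Matrix m n K)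
    {p : m → Prop} {q s : n → Prop} [DecidablePred q] [DecidablePred s]
    (hM : ∀ i j, M i j ≠ 0 → p i ∧ q j ∨ s j) :
    M.rank ≤ (M.toBlock p q).rank + Fintype.card {j // s j} := by
  let extend := Function.ExtendByZero.linearMap K (Subtype.val : {i // p i} → m)
  let blockCols := Submodule.span K (Set.range (M.toBlock p q).col)
  let cols := Submodule.span K (Set.range fun j : {j // s j} ↦ M.col j)
  have hspan : Submodule.span K (Set.range M.col) ≤ blockCols.map extend ⊔ cols := by
    rw [Submodule.span_le]
    rintro _ ⟨j, rfl⟩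
    by_cases hs : s j
    · exact Submodule.mem_sup_right (Submodule.subset_span ⟨⟨j, hs⟩, rfl⟩)
    · refine Submodule.mem_sup_left ?_
      by_cases hq : q j
      · refine ⟨_, Submodule.subset_span ⟨⟨j, hq⟩, rfl⟩, ?_⟩
        ext i
        by_cases hp : p i
        · exact Subtype.val_injective.extend_apply _ _ (⟨i, hp⟩ : {i // p i})
        · have hzero : M i j = 0 := by grind
          simp [extend, hp, hzero]
      · have hzero : M.col j = 0 := by ext i; simp only [col_apply, Pi.zero_apply]; grind
        exact hzero ▸ Submodule.zero_mem _
  calc M.rank = Module.finrank K (Submodule.span K (Set.range M.col)) :=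
        M.rank_eq_finrank_span_cols
    _ ≤ Module.finrank K ↥(blockCols.map extend ⊔ cols) := Submodule.finrank_mono hspan
    _ ≤ Module.finrank K (blockCols.map extend) + Module.finrank K cols :=
        Submodule.finrank_add_le_finrank_add_finrank _ _
    _ ≤ Module.finrank K blockCols + Fintype.card {j // s j} :=
        add_le_add (Submodule.finrank_map_le _ _) (finrank_range_le_card _)
    _ = (M.toBlock p q).rank + Fintype.card {j // s j} := by rw [rank_eq_finrank_span_cols]

lemma toBlock_exact_of_sq_eq_zero {ι : Type*} [Fintype ι] {E : Matrix ι ι K} {b : ι → Fin 3}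
    (hb : ∀ i j, b j ≤ b i → E i j = 0) (hE : E * E = 0)
    (hcard : Fintype.card {i // b i = 1} =
      Fintype.card {i // b i = 0} + Fintype.card {i // b i = 2})
    (hrank : Fintype.card {i // b i = 1} ≤ E.rank) :
    Function.Injective (E.toBlock (b · = 1) (b · = 2)).mulVec ∧
      Function.Exact (E.toBlock (b · = 1) (b · = 2)).mulVec
        (E.toBlock (b · = 0) (b · = 1)).mulVec ∧
      Function.Surjective (E.toBlock (b · = 0) (b · = 1)).mulVec := by
  set A := E.toBlock (b · = 0) (b · = 1)
  set B := E.toBlock (b · = 1) (b · = 2)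
  have hA : E.rank ≤ A.rank + Fintype.card {j // b j = 2} :=
    rank_le_rank_toBlock_add_card E fun i j ↦ by grind
  have hB : E.rank ≤ B.rank + Fintype.card {i // b i = 0} := by
    have := rank_le_rank_toBlock_add_card Eᵀ (p := (b · = 2)) (q := (b · = 1)) (s := (b · = 0))
      fun i j ↦ by grind [transpose_apply]
    rwa [rank_transpose, ← rank_transpose (toBlock _ _ _)] at this
  have hAB : A * B = 0 := by
    have hsplit := toBlock_mul_eq_add (b · = 0) (b · = 1) (b · = 2) E E
    have hother : (E.toBlock (b · = 0) (¬b · = 1)) * E.toBlock (¬b · = 1) (b · = 2) = 0 := by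
      ext i j
      refine Finset.sum_eq_zero fun l _ ↦ ?_
      simp only [toBlock_apply]
      grind
    rw [hE, hother, add_zero] at hsplit
    exact hsplit.symm
  exact ⟨injective_mulVec_of_card_le_rank (by omega),
    exact_mulVec_of_card_le_rank_add_rank hAB (by omega),
    surjective_mulVec_of_card_le_rank (by omega)⟩

end Rank

theorem statement_11_general {k σ ι : Type*} [Field k] [IsAlgClosed k] [Fintype σ] [Fintype ι]
    (D : Matrix ι ι (MvPolynomial σ k)) (b : ι → Fin 3) (hb : ∀ i j, b j ≤ b i → D i j = 0)
    (hcard : Fintype.card {i // b i = 1} =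
      Fintype.card {i // b i = 0} + Fintype.card {i // b i = 2})
    (hsq : D * D = 0) (hrow : ∃ i, b i = 0 ∧ ∀ j, eval (0 : σ → k) (D i j) = 0)
    (hrank : ∀ a : σ → k, a ≠ 0 → Fintype.card {i // b i = 1} ≤ (D.map (eval a)).rank) :
    Fintype.card σ < 3 := by
  classical
  by_contra! hσ
  have hexact (a : σ → k) (ha : a ≠ 0) := toBlock_exact_of_sq_eq_zero (E := D.map (eval a))
    (fun i j hij ↦ by simp [hb i j hij]) (by rw [← Matrix.map_mul, hsq]; ext; simp) hcard
    (hrank a ha)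
  have hsurj : Function.Surjective (D.toBlock (b · = 0) (b · = 1)).mulVecLin :=
    surjective_mulVecLin_of_exact_eval hσ (fun a ha ↦ (hexact a ha).1)
      (fun a ha ↦ (hexact a ha).2.1) (fun a ha ↦ (hexact a ha).2.2)
  obtain ⟨i, hi, hrow⟩ := hrow
  obtain ⟨v, hv⟩ := hsurj (Pi.single ⟨i, hi⟩ 1)
  have h01 := congrArg (eval 0) (congrFun hv ⟨i, hi⟩)
  simp only [mulVecLin_apply, mulVec, dotProduct, toBlock_apply, map_sum, map_mul, hrow, zero_mul,
    Finset.sum_const_zero, Pi.single_eq_same, map_one, zero_ne_one] at h01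

theorem statement_11 {k : Type*} [Field k] [IsAlgClosed k] {r : ℕ}
    (D : Matrix (Fin 8) (Fin 8) (MvPolynomial (Fin r) k))
    (hstd : StandardConditions D)
    (hzero : ∀ i j : Fin 8,
        ¬((1 ≤ (i : ℕ) + 1 ∧ (i : ℕ) + 1 ≤ 2 ∧ 3 ≤ (j : ℕ) + 1 ∧ (j : ℕ) + 1 ≤ 8) ∨
          (3 ≤ (i : ℕ) + 1 ∧ (i : ℕ) + 1 ≤ 6 ∧ 7 ≤ (j : ℕ) + 1 ∧ (j : ℕ) + 1 ≤ 8)) →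
        D i j = 0) :
    r < 3 := by
  obtain ⟨-, hsq, h0, hrank, -⟩ := hstd
  have hb : ∀ i j, (![0, 0, 1, 1, 1, 1, 2, 2] : Fin 8 → Fin 3) j ≤
      (![0, 0, 1, 1, 1, 1, 2, 2] : Fin 8 → Fin 3) i → D i j = 0 :=
    fun i j hij ↦ hzero i j (by revert i j; decide)
  simpa using statement_11_general D _ hb rfl hsq ⟨0, rfl, h0 0⟩ fun a ha ↦ (hrank a ha).ge
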